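/- Let d ≥ 1 and τ ∈ ℝ. Then the function u ↦ u^{−1+2πiτ} ∫₀^u (πs)^{1−d/2} J_{d/2}(2πs) ds tends to 0 both as u → 0+ and as u → ∞. -/

import Mathlib

open MeasureTheory Metric Set Real Complex Filter
open scoped FourierTransform RealInnerProductSpace Pointwise ENNReal Topology

noncomputable section

/-- The Euclidean space `ℝ^d`. -/
abbrev E (d : ℕ) := EuclideanSpace ℝ (Fin d)

/-- View a plain vector `Fin d → ℝ` as a point of Euclidean space. -/
def toE {d : ℕ} (v : Fin d → ℝ) : E d := (EuclideanSpace.equiv (Fin d) ℝ).symm v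

/-- The point lattice `T = A ℤ^d`. -/
def latticeSet (d : ℕ) (A : Matrix (Fin d) (Fin d) ℝ) : Set (E d) :=
  {p | ∃ n : Fin d → ℤ, p = toE (A.mulVec fun i => (n i : ℝ))}

/-- The fundamental region `F_T = A [0,1)^d`. -/
def fundRegion (d : ℕ) (A : Matrix (Fin d) (Fin d) ℝ) : Set (E d) :=
  (fun y => toE (A.mulVec y)) '' (Set.pi Set.univ fun _ : Fin d => Set.Ico (0 : ℝ) 1)

/-- Number of lattice points in the translate `D + x`. -/
def latticeCount (d : ℕ) (A : Matrix (Fin d) (Fin d) ℝ) (D : Set (E d)) (x : E d) : ℕ :=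
  (((fun y => y + x) '' D) ∩ latticeSet d A).ncard

/-- The dual lattice `T* = {ξ | ξ·p ∈ ℤ for all p ∈ T}`. -/
def dualLattice (d : ℕ) (A : Matrix (Fin d) (Fin d) ℝ) : Set (E d) :=
  {ξ | ∀ p ∈ latticeSet d A, ∃ k : ℤ, ⟪ξ, p⟫ = (k : ℝ)}

/-- The (complex-valued) indicator function of a set. -/
def indC {d : ℕ} (D : Set (E d)) : E d → ℂ := D.indicator 1

/-- The covariogram `γ_D(x) = ∫ I_D(y) I_D(y - x) dy`. -/
def covariogram {d : ℕ} (D : Set (E d)) (x : E d) : ℝ :=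
  ∫ y, (D.indicator (1 : E d → ℝ) y) * (D.indicator (1 : E d → ℝ) (y - x))

/-- The normalized (probability) surface measure on the unit sphere `S^{d-1}`. -/
def sphereProb (d : ℕ) : Measure (sphere (0 : E d) 1) :=
  ((volume : Measure (E d)).toSphere Set.univ)⁻¹ • (volume : Measure (E d)).toSphere

/-- Rotational quadratic average of the modulus of the Fourier transform of `I_D`:
`γ̄̂_D(ρ) = ∫_{S^{d-1}} |Î_D(ρ ξ)|² dσ(ξ)`. -/
def avgFT {d : ℕ} (D : Set (E d)) (ρ : ℝ) : ℝ :=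
  ∫ ξ : sphere (0 : E d) 1, ‖𝓕 (indC D) (ρ • (ξ : E d))‖ ^ 2 ∂(sphereProb d)

/-- The isotropic covariogram, via its (equivalent) definition as the spherical average
`γ̄_D(u) = ∫_{S^{d-1}} γ_D(u ξ) dσ(ξ)`. -/
def isoCov {d : ℕ} (D : Set (E d)) (u : ℝ) : ℝ :=
  ∫ ξ : sphere (0 : E d) 1, covariogram D (u • (ξ : E d)) ∂(sphereProb d)

/-- Bessel function of the first kind (power series definition, real order). -/
def besselJ (ν : ℝ) (z : ℝ) : ℝ :=
  ∑' k : ℕ, (-1 : ℝ) ^ k * (z / 2) ^ (ν + 2 * k) / (Nat.factorial k * Real.Gamma (ν + k + 1))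

/-- `κ_d`, the volume of the unit ball in `ℝ^d`. -/
def unitBallVol (d : ℕ) : ℝ := Real.pi ^ ((d : ℝ) / 2) / Real.Gamma ((d : ℝ) / 2 + 1)

/-- The image of a set `D` under the rotation given by a matrix `M`. -/
def rotSet {d : ℕ} (M : Matrix (Fin d) (Fin d) ℝ) (D : Set (E d)) : Set (E d) :=
  (fun y => toE (M.mulVec (EuclideanSpace.equiv (Fin d) ℝ y))) '' D

/-- The special orthogonal group `SO(d)`, as a set of matrices. -/
def SOSet (d : ℕ) : Set (Matrix (Fin d) (Fin d) ℝ) :=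
  {M | M ∈ Matrix.specialOrthogonalGroup (Fin d) ℝ}

/-- Borel measurable structure on the space of `d × d` real matrices. -/
instance matrixMeasurableSpace {d : ℕ} : MeasurableSpace (Matrix (Fin d) (Fin d) ℝ) :=
  borel _

instance matrixBorelSpace {d : ℕ} : BorelSpace (Matrix (Fin d) (Fin d) ℝ) := ⟨rfl⟩

/-!
Write `J_ν(x) = (x / 2) ^ ν * C_ν(-(x / 2) ^ 2)` with the entire Bessel–Clifford function `C_ν`.
Since `C_ν' = C_{ν+1}`, the integral equals `(C_{ν-1}(0) - C_{ν-1}(-(π u) ^ 2)) / (2 π)`. This is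
`O(u ^ 2)` as `u → 0+` because `C_{ν-1}` is differentiable at `0`, and it is bounded for `1 / 2 ≤ ν`
because the energy `|C_{ν-1}(-t)| ^ 2 + t |C_ν(-t)| ^ 2` is nonincreasing in `t`, so the
prefactor of modulus `u⁻¹` is outweighed at `0` and decisive at `∞`.
-/

open Asymptotics
open scoped Nat

section PowerSeries

variable {𝕜 F : Type*} [NontriviallyNormedField 𝕜] [NormedAddCommGroup F] [NormedSpace 𝕜 F]
  [CompleteSpace F] {p : FormalMultilinearSeries 𝕜 𝕜 F} {z : 𝕜}

theorem hasDerivAt_sum_of_hasSum {f' : F} (hz : z ∈ eball (0 : 𝕜) p.radius)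
    (hf' : HasSum (fun n => z ^ n • (n + 1) • p.coeff (n + 1)) f') :
    HasDerivAt p.sum f' z := by
  have hp : HasFPowerSeriesOnBall p.sum p 0 p.radius :=
    p.hasFPowerSeriesOnBall (pos_of_mem_eball hz)
  have hdiff : DifferentiableAt 𝕜 p.sum z := hp.differentiableOn.differentiableAt
    (isOpen_eball.mem_nhds hz)
  have hsum : HasSum (fun n => z ^ n • (n + 1) • p.coeff (n + 1)) (deriv p.sum z) := by
    simpa [FormalMultilinearSeries.apply_eq_pow_smul_coeff] using
      (hp.fderiv.hasSum hz).mapL (ContinuousLinearMap.apply 𝕜 F (1 : 𝕜))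
  exact hf'.unique hsum ▸ hdiff.hasDerivAt

end PowerSeries

section Cpow

variable {f : ℝ → ℝ} {c : ℂ} {p : ℝ}

theorem isBigO_cpow_mul {l : Filter ℝ} (hl : ∀ᶠ u in l, 0 < u) (hf : f =O[l] fun u => u ^ p) :
    (fun u : ℝ => (u : ℂ) ^ c * f u) =O[l] fun u => u ^ (c.re + p) := by
  have hcpow : (fun u : ℝ => (u : ℂ) ^ c) =O[l] fun u => u ^ c.re :=
    .of_norm_eventuallyLE (hl.mono fun u hu => (norm_cpow_eq_rpow_re_of_pos hu c).le)
  refine (hcpow.mul (isBigO_ofReal_left.2 hf)).trans_eventuallyEq ?_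
  exact hl.mono fun u hu => (Real.rpow_add hu _ _).symm

theorem tendsto_cpow_mul_nhdsGT_zero (hf : f =O[𝓝[>] 0] fun u => u ^ p) (hc : 0 < c.re + p) :
    Tendsto (fun u : ℝ => (u : ℂ) ^ c * f u) (𝓝[>] 0) (𝓝 0) := by
  refine (isBigO_cpow_mul self_mem_nhdsWithin hf).trans_tendsto ?_
  have hcont : ContinuousAt (fun u : ℝ => u ^ (c.re + p)) 0 :=
    Real.continuousAt_rpow_const 0 _ (.inr hc.le)
  simpa [ContinuousAt, Real.zero_rpow hc.ne'] using hcont.mono_left nhdsWithin_le_nhds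

theorem tendsto_cpow_mul_atTop (hf : f =O[atTop] fun u => u ^ p) (hc : c.re + p < 0) :
    Tendsto (fun u : ℝ => (u : ℂ) ^ c * f u) atTop (𝓝 0) := by
  refine (isBigO_cpow_mul (eventually_gt_atTop 0) hf).trans_tendsto ?_
  simpa using tendsto_rpow_neg_atTop (neg_pos.2 hc)

end Cpow

section BesselClifford

/-- The Bessel–Clifford function `C_ν(z) = ∑ z ^ k / (k! Γ(ν + k + 1))`, encoded as the regularized
hypergeometric function `₀F₁(; ν + 1; z)`. It is the entire part of the Bessel function:
`J_ν(x) = (x / 2) ^ ν * C_ν(-(x / 2) ^ 2)`. -/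
def besselClifford (ν z : ℂ) : ℂ := regularizedHGFun 0 {ν + 1} z

theorem mem_eball_radius_besselClifford (ν z : ℂ) :
    z ∈ eball (0 : ℂ) (regularizedHGFunSeries 0 {ν + 1}).radius := by
  rw [radius_regularizedHGFunSeries_eq_top (by simp)]
  exact mem_eball_zero_iff.2 enorm_lt_top

theorem hasSum_besselClifford (ν z : ℂ) :
    HasSum (fun k : ℕ => z ^ k / (k ! * Complex.Gamma (ν + k + 1))) (besselClifford ν z) := by
  refine (FormalMultilinearSeries.hasSum _ (mem_eball_radius_besselClifford ν z)).congr_fun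
    fun k => ?_
  simp [regularizedHGFunCoeff, add_right_comm, div_eq_mul_inv]

theorem hasDerivAt_besselClifford (ν z : ℂ) :
    HasDerivAt (besselClifford ν) (besselClifford (ν + 1) z) z := by
  refine hasDerivAt_sum_of_hasSum (mem_eball_radius_besselClifford ν z) ?_
  refine (hasSum_besselClifford (ν + 1) z).congr_fun fun k => ?_
  have hk : (k : ℂ) + 1 ≠ 0 := Nat.cast_add_one_ne_zero k
  simp only [regularizedHGFunSeries_coeff, regularizedHGFunCoeff, Multiset.map_zero,
    Multiset.prod_zero, Multiset.map_singleton, Multiset.prod_singleton, Nat.factorial_succ,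
    Nat.cast_mul, Nat.cast_succ, nsmul_eq_mul, smul_eq_mul]
  rw [show ν + 1 + (k + 1) = ν + 1 + k + 1 by ring]
  field_simp

theorem continuous_besselClifford (ν : ℂ) : Continuous (besselClifford ν) :=
  continuous_iff_continuousAt.2 fun z => (hasDerivAt_besselClifford ν z).continuousAt

theorem besselClifford_eq_add (ν z : ℂ) :
    besselClifford ν z =
      (ν + 1) * besselClifford (ν + 1) z + z * besselClifford (ν + 2) z := by
  have hshift : HasSum (fun k : ℕ => k * (z ^ k / (k ! * Complex.Gamma (ν + 1 + k + 1))))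
      (z * besselClifford (ν + 2) z) := by
    rw [← hasSum_nat_add_iff' 1]
    simp only [Finset.range_one, Finset.sum_singleton, Nat.cast_zero, zero_mul, sub_zero]
    refine ((hasSum_besselClifford (ν + 2) z).mul_left z).congr_fun fun k => ?_
    have hk : (k : ℂ) + 1 ≠ 0 := Nat.cast_add_one_ne_zero k
    rw [Nat.factorial_succ, pow_succ']
    push_cast
    rw [show ν + 1 + (k + 1) + 1 = ν + 2 + k + 1 by ring]
    field_simp
  refine (hasSum_besselClifford ν z).unique
    ((((hasSum_besselClifford (ν + 1) z).mul_left (ν + 1)).add hshift).congr_fun fun k => ?_)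
  have hGamma := one_div_Gamma_eq_self_mul_one_div_Gamma_add_one (ν + k + 1)
  rw [show ν + 1 + k + 1 = ν + k + 1 + 1 by ring]
  simp only [div_eq_mul_inv, mul_inv, hGamma]
  ring

theorem hasDerivAt_besselClifford_neg (ν : ℂ) (t : ℝ) :
    HasDerivAt (fun t : ℝ => besselClifford ν (-t)) (-besselClifford (ν + 1) (-t)) t := by
  simpa using ((hasDerivAt_besselClifford ν (-t)).comp (t : ℂ) (hasDerivAt_neg _)).comp_ofReal

-- For real `ν` and `t = (x / 2) ^ 2` this energy is
-- `(x / 2) ^ (-2 * ν) * (J_ν(x) ^ 2 + J_{ν+1}(x) ^ 2)`.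
theorem hasDerivAt_besselClifford_energy (ν : ℂ) (t : ℝ) :
    HasDerivAt
      (fun t : ℝ => ‖besselClifford ν (-t)‖ ^ 2 + t * ‖besselClifford (ν + 1) (-t)‖ ^ 2)
      (-(2 * ν.re + 1) * ‖besselClifford (ν + 1) (-t)‖ ^ 2) t := by
  have h₀ := (hasDerivAt_besselClifford_neg ν t).norm_sq
  have h₁ := (hasDerivAt_besselClifford_neg (ν + 1) t).norm_sq
  refine (h₀.add ((hasDerivAt_id t).mul h₁)).congr_deriv ?_
  rw [show ν + 1 + 1 = ν + 2 by ring, besselClifford_eq_add ν (-t)]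
  simp only [Complex.inner, ← normSq_eq_norm_sq, normSq_apply, conj_re, conj_im, mul_re, mul_im,
    add_re, add_im, neg_re, neg_im, one_re, one_im, ofReal_re, ofReal_im, id_eq]
  ring

theorem norm_besselClifford_neg_le {ν : ℂ} (hν : -1 / 2 ≤ ν.re) {t : ℝ} (ht : 0 ≤ t) :
    ‖besselClifford ν (-t)‖ ≤ ‖besselClifford ν 0‖ := by
  have hanti := antitone_of_hasDerivAt_nonpos (hasDerivAt_besselClifford_energy ν) fun x =>
    mul_nonpos_of_nonpos_of_nonneg (by linarith) (sq_nonneg _)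
  refine le_of_sq_le_sq ?_ (norm_nonneg _)
  calc ‖besselClifford ν (-t)‖ ^ 2
      ≤ ‖besselClifford ν (-t)‖ ^ 2 + t * ‖besselClifford (ν + 1) (-t)‖ ^ 2 :=
        le_add_of_nonneg_right (by positivity)
    _ ≤ ‖besselClifford ν 0‖ ^ 2 := by simpa using hanti ht

end BesselClifford

section BesselJ

theorem ofReal_besselJ (ν : ℝ) {x : ℝ} (hx : 0 < x) :
    (besselJ ν x : ℂ) = ((x / 2) ^ ν : ℝ) * besselClifford ν (-(x / 2) ^ 2) := by
  rw [besselJ, Complex.ofReal_tsum, ← (hasSum_besselClifford ν _).tsum_eq, ← tsum_mul_left]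
  refine tsum_congr fun k => ?_
  have hpow : (x / 2) ^ (ν + 2 * k) = (x / 2) ^ ν * ((x / 2) ^ 2) ^ k := by
    rw [Real.rpow_add (half_pos hx), ← pow_mul, ← Real.rpow_natCast, Nat.cast_mul, Nat.cast_two]
  rw [hpow, neg_pow ((x / 2 : ℂ) ^ 2)]
  push_cast [← Complex.Gamma_ofReal]
  ring

theorem ofReal_rpow_mul_besselJ (ν : ℝ) {x : ℝ} (hx : 0 < x) :
    ((x ^ (1 - ν) * besselJ ν (2 * x) : ℝ) : ℂ) = x * besselClifford ν (-x ^ 2) := by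
  have hpow : x ^ (1 - ν) * x ^ ν = x := by rw [← Real.rpow_add hx, sub_add_cancel, Real.rpow_one]
  rw [Complex.ofReal_mul, ofReal_besselJ ν (by positivity), ← mul_assoc,
    mul_div_cancel_left₀ x two_ne_zero, ← Complex.ofReal_mul, hpow]
  simp

theorem hasDerivAt_besselClifford_neg_sq (ν : ℂ) (x : ℝ) :
    HasDerivAt (fun x : ℝ => besselClifford ν (-x ^ 2))
      (-2 * x * besselClifford (ν + 1) (-x ^ 2)) x := by
  have hsq : HasDerivAt (fun z : ℂ => -z ^ 2) (-(2 * x)) x := by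
    simpa using (hasDerivAt_pow 2 (x : ℂ)).fun_neg
  refine ((hasDerivAt_besselClifford ν (-x ^ 2)).comp (x : ℂ) hsq).comp_ofReal.congr_deriv ?_
  ring

theorem integral_rpow_mul_besselJ (ν : ℝ) {x : ℝ} (hx : 0 ≤ x) :
    ((∫ s in 0..x, s ^ (1 - ν) * besselJ ν (2 * s) : ℝ) : ℂ) =
      (besselClifford (ν - 1) 0 - besselClifford (ν - 1) (-x ^ 2)) / 2 := by
  have hprim (s : ℝ) : HasDerivAt (fun s : ℝ => -besselClifford (ν - 1) (-s ^ 2) / 2)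
      (s * besselClifford ν (-s ^ 2)) s := by
    refine ((hasDerivAt_besselClifford_neg_sq (ν - 1) s).neg.div_const 2).congr_deriv ?_
    rw [sub_add_cancel]
    ring
  have hcont : Continuous fun s : ℝ => s * besselClifford ν (-s ^ 2) :=
    Complex.continuous_ofReal.mul ((continuous_besselClifford ν).comp (by fun_prop))
  calc ((∫ s in 0..x, s ^ (1 - ν) * besselJ ν (2 * s) : ℝ) : ℂ)
      = ∫ s in 0..x, s * besselClifford ν (-s ^ 2) := by
        rw [← intervalIntegral.integral_ofReal]
        refine intervalIntegral.integral_congr_ae (.of_forall fun s hs => ?_)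
        rw [uIoc_of_le hx] at hs
        exact ofReal_rpow_mul_besselJ ν hs.1
    _ = (besselClifford (ν - 1) 0 - besselClifford (ν - 1) (-x ^ 2)) / 2 := by
        rw [intervalIntegral.integral_eq_sub_of_hasDerivAt (fun s _ => hprim s)
          (hcont.intervalIntegrable 0 x), ofReal_zero, zero_pow two_ne_zero, neg_zero]
        ring

/-- The integral `∫₀^u (πs)^{1-ν} J_ν(2πs) ds` of the boundary term, for a real order `ν`. -/
def boundaryIntegral (ν u : ℝ) : ℝ :=
  ∫ s in Set.Ioc (0 : ℝ) u, (π * s) ^ (1 - ν) * besselJ ν (2 * π * s)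

theorem ofReal_boundaryIntegral (ν : ℝ) {u : ℝ} (hu : 0 ≤ u) :
    (boundaryIntegral ν u : ℂ) =
      (besselClifford (ν - 1) 0 - besselClifford (ν - 1) (-(π * u : ℝ) ^ 2)) / (2 * π) := by
  simp only [boundaryIntegral, mul_assoc]
  rw [← intervalIntegral.integral_of_le hu,
    intervalIntegral.integral_comp_mul_left (fun s => s ^ (1 - ν) * besselJ ν (2 * s)) pi_ne_zero,
    mul_zero, smul_eq_mul, Complex.ofReal_mul, integral_rpow_mul_besselJ ν (by positivity)]
  push_cast
  ring

theorem boundaryIntegral_isBigO_nhdsGT_zero (ν : ℝ) :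
    boundaryIntegral ν =O[𝓝[>] 0] fun u => u ^ (2 : ℝ) := by
  have hlim : Tendsto (fun u : ℝ => -((π * u : ℝ) : ℂ) ^ 2) (𝓝[>] 0) (𝓝 0) :=
    tendsto_nhdsWithin_of_tendsto_nhds (Continuous.tendsto' (by fun_prop) _ _ (by simp))
  have hsub := (hasDerivAt_besselClifford (ν - 1) 0).isBigO_sub.comp_tendsto hlim
  rw [← Complex.isBigO_ofReal_left]
  calc (fun u => (boundaryIntegral ν u : ℂ))
      =ᶠ[𝓝[>] 0] fun u => -(2 * π : ℂ)⁻¹ *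
        (besselClifford (ν - 1) (-(π * u : ℝ) ^ 2) - besselClifford (ν - 1) 0) := by
        filter_upwards [self_mem_nhdsWithin] with u hu
        rw [ofReal_boundaryIntegral ν (mem_Ioi.1 hu).le]
        ring
    _ =O[𝓝[>] 0] fun u => -((π * u : ℝ) : ℂ) ^ 2 - 0 := hsub.const_mul_left _
    _ =O[𝓝[>] 0] fun u => u ^ (2 : ℝ) := .of_bound (π ^ 2) (.of_forall fun u => by
      simp [mul_pow])

theorem boundaryIntegral_isBigO_atTop {ν : ℝ} (hν : 1 / 2 ≤ ν) :
    boundaryIntegral ν =O[atTop] fun u => u ^ (0 : ℝ) := by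
  have hre : -1 / 2 ≤ (ν - 1 : ℂ).re := by
    rw [← Complex.ofReal_one, ← Complex.ofReal_sub, Complex.ofReal_re]
    linarith
  refine .of_bound ((‖besselClifford (ν - 1) 0‖ + ‖besselClifford (ν - 1) 0‖) / (2 * π)) ?_
  filter_upwards [eventually_ge_atTop 0] with u hu
  have hbound : ‖besselClifford (ν - 1) (-(π * u : ℝ) ^ 2)‖ ≤ ‖besselClifford (ν - 1) 0‖ := by
    simpa using norm_besselClifford_neg_le hre (sq_nonneg (π * u))
  have htwo_pi : ‖(2 * π : ℂ)‖ = 2 * π := by simp [pi_pos.le]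
  rw [← Complex.norm_real, ofReal_boundaryIntegral ν hu, norm_div, htwo_pi, Real.rpow_zero,
    norm_one, mul_one]
  gcongr
  exact (norm_sub_le _ _).trans (by gcongr)

end BesselJ

theorem boundary_term_tendsto_zero_general {ν : ℝ} (hν : 1 / 2 ≤ ν) {c : ℂ} (hc₀ : -2 < c.re)
    (hc : c.re < 0) :
    Tendsto (fun u : ℝ => (u : ℂ) ^ c * boundaryIntegral ν u) (𝓝[>] 0) (𝓝 0) ∧
      Tendsto (fun u : ℝ => (u : ℂ) ^ c * boundaryIntegral ν u) atTop (𝓝 0) :=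
  ⟨tendsto_cpow_mul_nhdsGT_zero (boundaryIntegral_isBigO_nhdsGT_zero ν) (by linarith),
    tendsto_cpow_mul_atTop (boundaryIntegral_isBigO_atTop hν) (by linarith)⟩

/-- the boundary term `u^{-1+2πiτ} ∫₀^u (πs)^{1-d/2} J_{d/2}(2πs) ds` vanishes
in the limits `u → 0+` and `u → ∞`. -/
theorem boundary_term_tendsto_zero (d : ℕ) (hd : 1 ≤ d) (τ : ℝ) :
    Tendsto (fun u : ℝ =>
        (u : ℂ) ^ ((-1 : ℂ) + 2 * Real.pi * Complex.I * τ) *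
          ((∫ s in Set.Ioc (0 : ℝ) u,
            (Real.pi * s) ^ (1 - (d : ℝ) / 2) * besselJ ((d : ℝ) / 2) (2 * Real.pi * s) : ℝ) : ℂ))
      (𝓝[>] (0 : ℝ)) (𝓝 0) ∧
    Tendsto (fun u : ℝ =>
        (u : ℂ) ^ ((-1 : ℂ) + 2 * Real.pi * Complex.I * τ) *
          ((∫ s in Set.Ioc (0 : ℝ) u,
            (Real.pi * s) ^ (1 - (d : ℝ) / 2) * besselJ ((d : ℝ) / 2) (2 * Real.pi * s) : ℝ) : ℂ))
      atTop (𝓝 0) := by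
  have hν : (1 : ℝ) / 2 ≤ d / 2 := by gcongr; exact_mod_cast hd
  exact boundary_term_tendsto_zero_general hν (by simp) (by simp)

end
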